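/- Logarithmic derivative bound at fixed β₁: let (φ, β₁) ∈ D, and let u(t) = U(t, β₁) and v(t) = V(t, β₁) as functions of the first variable t near φ. Then v′(φ) < 0, and the real number R := −(v(φ)·(v(φ) − 1))/v′(φ) · (u′(φ)/u(φ) − v′(φ)/v(φ)) satisfies 0 < R < S, where S = ((3φ − β₁)/(1 − β₁))·(V(φ, β₁) − 1) + 1/2. -/

import Mathlib

/-- `U(φ, β₁) = 9(1−φ)β₃/(Y β₂)` where `β₂ = 3(1−φ) − 2β₁`, `β₃ = β₁ − 2 + 3φ`,
`Y = 3φ − β₁`. -/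
noncomputable def Ufun (φ β₁ : ℝ) : ℝ :=
  9 * (1 - φ) * (β₁ - 2 + 3 * φ) / ((3 * φ - β₁) * (3 * (1 - φ) - 2 * β₁))

/-- `V(φ, β₁) = 1 + β₂²/(3 Y β₃)`. -/
noncomputable def Vfun (φ β₁ : ℝ) : ℝ :=
  1 + (3 * (1 - φ) - 2 * β₁) ^ 2 / (3 * (3 * φ - β₁) * (β₁ - 2 + 3 * φ))

/-- The constraint polygon `D` for the pair `(φ, β₁)`. -/
def Dset : Set (ℝ × ℝ) :=
  {q | 0.525245 ≤ q.1 ∧ q.1 ≤ 0.619063 ∧ 0.33018 ≤ q.2 ∧ q.2 ≤ 0.52891 ∧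
    0.33018 ≤ 3 * (1 - q.1) - 2 * q.2 ∧ 3 * (1 - q.1) - 2 * q.2 ≤ 0.52891 ∧
    0.077639 ≤ q.2 - 2 + 3 * q.1 ∧ q.2 - 2 + 3 * q.1 ≤ 0.21782}

/-!
The numbers `β₁, β₂, β₃` sum to `1`, and `Y = 2β₂ + 3β₃`, `1 - β₁ = β₂ + β₃`,
`3(1 - φ) = β₂ + 2β₁`. Since `v' = (v - 1)'`, the quantity `R` equals
`v - 1 - v · (log u)' / (log (v - 1))'`, and both logarithmic derivatives are sums of simple
fractions. Because `3Yβ₃ + β₂² = (β₂ + 3β₃)²`, these combine to the exact identity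
`S - R = β₂(β₂ + 3β₃) / (18(β₂ + β₃)(1 - φ))`. The right-hand side is positive, and
`3(1 - φ) ≥ β₂` makes it smaller than `1/2 < S`.
-/

section LogDeriv

variable {𝕜 : Type*} [NontriviallyNormedField 𝕜]

theorem logDeriv_eq_of_hasDerivAt {f : 𝕜 → 𝕜} {f' x : 𝕜} (h : HasDerivAt f f' x) :
    logDeriv f x = f' / f x := by
  rw [logDeriv_apply, h.deriv]

theorem neg_mul_sub_one_div_deriv_mul_sub_eq_logDeriv {u v : 𝕜 → 𝕜} {x : 𝕜}
    (hv : v x ≠ 0) (hv' : deriv v x ≠ 0) :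
    -(v x * (v x - 1)) / deriv v x * (deriv u x / u x - deriv v x / v x) =
      v x - 1 - v x / logDeriv (fun t => v t - 1) x * logDeriv u x := by
  simp only [logDeriv_apply, deriv_sub_const, div_div_eq_mul_div]
  field_simp
  ring

end LogDeriv

/-- The parameter `β₂ = 3(1 - φ) - 2β₁` of the triple `β₁ + β₂ + β₃ = 1`, as a function of
`(φ, β₁)`. -/
def beta₂ (φ β₁ : ℝ) : ℝ := 3 * (1 - φ) - 2 * β₁

/-- The parameter `β₃ = β₁ - 2 + 3φ` of the triple `β₁ + β₂ + β₃ = 1`, as a function of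
`(φ, β₁)`. -/
def beta₃ (φ β₁ : ℝ) : ℝ := β₁ - 2 + 3 * φ

/-- The quantity `R`: the rescaled difference of the logarithmic derivatives of `U` and `V` in the
first variable, at fixed `β₁`. -/
noncomputable def Rfun (φ β₁ : ℝ) : ℝ :=
  -(Vfun φ β₁ * (Vfun φ β₁ - 1)) / deriv (fun t => Vfun t β₁) φ *
    (deriv (fun t => Ufun t β₁) φ / Ufun φ β₁ - deriv (fun t => Vfun t β₁) φ / Vfun φ β₁)

/-- The upper bound `S = (Y / (1 - β₁)) (V - 1) + 1/2` for `R`, where `Y = 3φ - β₁`. -/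
noncomputable def Sfun (φ β₁ : ℝ) : ℝ :=
  (3 * φ - β₁) / (1 - β₁) * (Vfun φ β₁ - 1) + 1 / 2

section Parameters

variable {φ β₁ : ℝ}

theorem three_mul_sub_eq_beta₂_add_beta₃ (φ β₁ : ℝ) :
    3 * φ - β₁ = 2 * beta₂ φ β₁ + 3 * beta₃ φ β₁ := by
  unfold beta₂ beta₃; ring

theorem one_sub_eq_beta₂_add_beta₃ (φ β₁ : ℝ) : 1 - β₁ = beta₂ φ β₁ + beta₃ φ β₁ := by
  unfold beta₂ beta₃; ring

theorem three_mul_one_sub_eq_beta₂_add (φ β₁ : ℝ) : 3 * (1 - φ) = beta₂ φ β₁ + 2 * β₁ := by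
  unfold beta₂; ring

theorem three_mul_sub_pos (hβ₂ : 0 < beta₂ φ β₁) (hβ₃ : 0 < beta₃ φ β₁) : 0 < 3 * φ - β₁ := by
  rw [three_mul_sub_eq_beta₂_add_beta₃]; positivity

theorem Ufun_eq (φ β₁ : ℝ) :
    Ufun φ β₁ = 9 * (1 - φ) * beta₃ φ β₁ / ((3 * φ - β₁) * beta₂ φ β₁) := rfl

theorem Vfun_sub_one (φ β₁ : ℝ) :
    Vfun φ β₁ - 1 = beta₂ φ β₁ ^ 2 / (3 * (3 * φ - β₁) * beta₃ φ β₁) :=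
  add_sub_cancel_left _ _

theorem Vfun_eq (hY : 3 * φ - β₁ ≠ 0) (hβ₃ : beta₃ φ β₁ ≠ 0) :
    Vfun φ β₁ = (beta₂ φ β₁ + 3 * beta₃ φ β₁) ^ 2 / (3 * (3 * φ - β₁) * beta₃ φ β₁) := by
  rw [← sub_add_cancel (Vfun φ β₁) 1, Vfun_sub_one, div_add_one (by positivity)]
  congr 1
  rw [three_mul_sub_eq_beta₂_add_beta₃]
  ring

theorem Vfun_sub_one_pos (hβ₂ : 0 < beta₂ φ β₁) (hβ₃ : 0 < beta₃ φ β₁) : 0 < Vfun φ β₁ - 1 := by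
  have hY := three_mul_sub_pos hβ₂ hβ₃
  rw [Vfun_sub_one]
  positivity

theorem hasDerivAt_beta₂ (φ β₁ : ℝ) : HasDerivAt (fun t => beta₂ t β₁) (-3) φ := by
  simpa [beta₂] using (((hasDerivAt_id φ).const_sub 1).const_mul 3).sub_const (2 * β₁)

theorem hasDerivAt_beta₃ (φ β₁ : ℝ) : HasDerivAt (fun t => beta₃ t β₁) 3 φ := by
  simpa [beta₃] using ((hasDerivAt_id φ).const_mul 3).const_add (β₁ - 2)

theorem hasDerivAt_three_mul_sub (φ β₁ : ℝ) : HasDerivAt (fun t => 3 * t - β₁) 3 φ := by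
  simpa using ((hasDerivAt_id φ).const_mul 3).sub_const β₁

theorem logDeriv_Ufun (hφ : φ ≠ 1) (hY : 3 * φ - β₁ ≠ 0) (hβ₂ : beta₂ φ β₁ ≠ 0)
    (hβ₃ : beta₃ φ β₁ ≠ 0) :
    logDeriv (fun t => Ufun t β₁) φ =
      3 / beta₂ φ β₁ + 3 / beta₃ φ β₁ - 3 / (3 * φ - β₁) - 1 / (1 - φ) := by
  have : 1 - φ ≠ 0 := sub_ne_zero.2 hφ.symm
  have h₁ : HasDerivAt (fun t : ℝ => 1 - t) (-1) φ := by
    simpa using (hasDerivAt_id φ).const_sub 1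
  have h₂ := hasDerivAt_beta₂ φ β₁
  have h₃ := hasDerivAt_beta₃ φ β₁
  have hYd := hasDerivAt_three_mul_sub φ β₁
  have hnum := h₁.differentiableAt.const_mul 9
  simp only [Ufun_eq]
  rw [logDeriv_div φ (by positivity) (by positivity) (hnum.fun_mul h₃.differentiableAt)
      (hYd.differentiableAt.fun_mul h₂.differentiableAt),
    logDeriv_mul φ (by positivity) hβ₃ hnum h₃.differentiableAt,
    logDeriv_mul φ hY hβ₂ hYd.differentiableAt h₂.differentiableAt,
    logDeriv_const_mul φ 9 (by norm_num),
    logDeriv_eq_of_hasDerivAt h₁, logDeriv_eq_of_hasDerivAt h₂, logDeriv_eq_of_hasDerivAt h₃,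
    logDeriv_eq_of_hasDerivAt hYd]
  ring

theorem logDeriv_Vfun_sub_one (hY : 3 * φ - β₁ ≠ 0) (hβ₂ : beta₂ φ β₁ ≠ 0)
    (hβ₃ : beta₃ φ β₁ ≠ 0) :
    logDeriv (fun t => Vfun t β₁ - 1) φ =
      -(6 / beta₂ φ β₁ + 3 / beta₃ φ β₁ + 3 / (3 * φ - β₁)) := by
  have h₂ := hasDerivAt_beta₂ φ β₁
  have h₃ := hasDerivAt_beta₃ φ β₁
  have hYd := hasDerivAt_three_mul_sub φ β₁
  have hden := hYd.differentiableAt.const_mul 3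
  simp only [Vfun_sub_one]
  rw [logDeriv_div φ (by positivity) (by positivity) (h₂.differentiableAt.fun_pow 2)
      (hden.fun_mul h₃.differentiableAt),
    logDeriv_fun_pow h₂.differentiableAt,
    logDeriv_mul φ (by positivity) hβ₃ hden h₃.differentiableAt,
    logDeriv_const_mul φ 3 (by norm_num),
    logDeriv_eq_of_hasDerivAt h₂, logDeriv_eq_of_hasDerivAt h₃, logDeriv_eq_of_hasDerivAt hYd]
  push_cast
  ring

theorem deriv_Vfun_neg (hβ₂ : 0 < beta₂ φ β₁) (hβ₃ : 0 < beta₃ φ β₁) :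
    deriv (fun t => Vfun t β₁) φ < 0 := by
  have hY := three_mul_sub_pos hβ₂ hβ₃
  have hV := Vfun_sub_one_pos hβ₂ hβ₃
  have hlog : logDeriv (fun t => Vfun t β₁ - 1) φ < 0 := by
    rw [logDeriv_Vfun_sub_one hY.ne' hβ₂.ne' hβ₃.ne', neg_lt_zero]
    positivity
  calc deriv (fun t => Vfun t β₁) φ
      = logDeriv (fun t => Vfun t β₁ - 1) φ * (Vfun φ β₁ - 1) := by
        rw [logDeriv_apply, deriv_sub_const, div_mul_cancel₀ _ hV.ne']
    _ < 0 := mul_neg_of_neg_of_pos hlog hV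

theorem Vfun_div_logDeriv_Vfun_sub_one (hβ₂ : 0 < beta₂ φ β₁) (hβ₃ : 0 < beta₃ φ β₁) :
    Vfun φ β₁ / logDeriv (fun t => Vfun t β₁ - 1) φ =
      -(beta₂ φ β₁ * (beta₂ φ β₁ + 3 * beta₃ φ β₁) / (18 * (beta₂ φ β₁ + beta₃ φ β₁))) := by
  have hY := three_mul_sub_pos hβ₂ hβ₃
  have hlog : 6 / beta₂ φ β₁ + 3 / beta₃ φ β₁ + 3 / (3 * φ - β₁) =
      6 * (beta₂ φ β₁ + beta₃ φ β₁) * (beta₂ φ β₁ + 3 * beta₃ φ β₁) /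
        (beta₂ φ β₁ * beta₃ φ β₁ * (3 * φ - β₁)) := by
    rw [three_mul_sub_eq_beta₂_add_beta₃] at hY ⊢
    field_simp
    ring
  rw [Vfun_eq hY.ne' hβ₃.ne', logDeriv_Vfun_sub_one hY.ne' hβ₂.ne' hβ₃.ne', hlog]
  field_simp
  norm_num

theorem Sfun_sub_Rfun (hφ : φ ≠ 1) (hβ₂ : 0 < beta₂ φ β₁) (hβ₃ : 0 < beta₃ φ β₁) :
    Sfun φ β₁ - Rfun φ β₁ =
      beta₂ φ β₁ * (beta₂ φ β₁ + 3 * beta₃ φ β₁) /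
        (18 * (beta₂ φ β₁ + beta₃ φ β₁) * (1 - φ)) := by
  have hY := three_mul_sub_pos hβ₂ hβ₃
  have h1φ : 1 - φ ≠ 0 := sub_ne_zero.2 hφ.symm
  have hV : Vfun φ β₁ ≠ 0 := by linarith [Vfun_sub_one_pos hβ₂ hβ₃]
  have hR : Rfun φ β₁ = Vfun φ β₁ - 1 +
      beta₂ φ β₁ * (beta₂ φ β₁ + 3 * beta₃ φ β₁) / (18 * (beta₂ φ β₁ + beta₃ φ β₁)) *
        logDeriv (fun t => Ufun t β₁) φ := by
    rw [Rfun, neg_mul_sub_one_div_deriv_mul_sub_eq_logDeriv (v := fun t => Vfun t β₁) hV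
        (deriv_Vfun_neg hβ₂ hβ₃).ne,
      Vfun_div_logDeriv_Vfun_sub_one hβ₂ hβ₃, neg_mul, sub_neg_eq_add]
  rw [hR, logDeriv_Ufun hφ hY.ne' hβ₂.ne' hβ₃.ne', Sfun, Vfun_sub_one,
    one_sub_eq_beta₂_add_beta₃ φ β₁]
  rw [three_mul_sub_eq_beta₂_add_beta₃] at hY ⊢
  field_simp
  ring

theorem half_lt_Sfun (hβ₂ : 0 < beta₂ φ β₁) (hβ₃ : 0 < beta₃ φ β₁) : 1 / 2 < Sfun φ β₁ := by
  have hY := three_mul_sub_pos hβ₂ hβ₃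
  have hV := Vfun_sub_one_pos hβ₂ hβ₃
  rw [Sfun, one_sub_eq_beta₂_add_beta₃ φ β₁, lt_add_iff_pos_left]
  positivity

theorem Rfun_lt_Sfun (hφ : φ < 1) (hβ₂ : 0 < beta₂ φ β₁) (hβ₃ : 0 < beta₃ φ β₁) :
    Rfun φ β₁ < Sfun φ β₁ := by
  have : 0 < 1 - φ := sub_pos.2 hφ
  rw [← sub_pos, Sfun_sub_Rfun hφ.ne hβ₂ hβ₃]
  positivity

theorem Sfun_sub_Rfun_lt_half (hβ₁ : 0 ≤ β₁) (hβ₂ : 0 < beta₂ φ β₁) (hβ₃ : 0 < beta₃ φ β₁) :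
    Sfun φ β₁ - Rfun φ β₁ < 1 / 2 := by
  have h1φ : beta₂ φ β₁ ≤ 3 * (1 - φ) := by linarith [three_mul_one_sub_eq_beta₂_add φ β₁]
  have h1φ_pos : 0 < 1 - φ := by linarith
  rw [Sfun_sub_Rfun (sub_pos.1 h1φ_pos).ne hβ₂ hβ₃, div_lt_iff₀ (by positivity)]
  calc beta₂ φ β₁ * (beta₂ φ β₁ + 3 * beta₃ φ β₁)
      < 3 * (beta₂ φ β₁ + beta₃ φ β₁) * beta₂ φ β₁ := by nlinarith [mul_pos hβ₂ hβ₂]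
    _ ≤ 3 * (beta₂ φ β₁ + beta₃ φ β₁) * (3 * (1 - φ)) := by gcongr
    _ = 1 / 2 * (18 * (beta₂ φ β₁ + beta₃ φ β₁) * (1 - φ)) := by ring

theorem log_deriv_bound_fixed_beta_general (hβ₁ : 0 ≤ β₁) (hβ₂ : 0 < beta₂ φ β₁)
    (hβ₃ : 0 < beta₃ φ β₁) :
    deriv (fun t => Vfun t β₁) φ < 0 ∧ 0 < Rfun φ β₁ ∧ Rfun φ β₁ < Sfun φ β₁ := by
  have hφ : φ < 1 := by linarith [three_mul_one_sub_eq_beta₂_add φ β₁]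
  have hR_pos : 0 < Rfun φ β₁ := by
    linarith [half_lt_Sfun hβ₂ hβ₃, Sfun_sub_Rfun_lt_half hβ₁ hβ₂ hβ₃]
  exact ⟨deriv_Vfun_neg hβ₂ hβ₃, hR_pos, Rfun_lt_Sfun hφ hβ₂ hβ₃⟩

end Parameters

/-- logarithmic derivative bound at fixed `β₁`.  For `(φ, β₁) ∈ D`, with
`u(t) = U(t,β₁)`, `v(t) = V(t,β₁)`, one has `v′(φ) < 0`, and
`R := −(v(v−1))/v′ · (u′/u − v′/v)` (at `φ`) satisfies `0 < R < S` where
`S = ((3φ − β₁)/(1 − β₁))·(V − 1) + 1/2`. -/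
theorem log_deriv_bound_fixed_beta (φ β₁ : ℝ) (hD : (φ, β₁) ∈ Dset) :
    deriv (fun t => Vfun t β₁) φ < 0 ∧
      0 < -(Vfun φ β₁ * (Vfun φ β₁ - 1)) / deriv (fun t => Vfun t β₁) φ *
          (deriv (fun t => Ufun t β₁) φ / Ufun φ β₁ -
            deriv (fun t => Vfun t β₁) φ / Vfun φ β₁) ∧
      -(Vfun φ β₁ * (Vfun φ β₁ - 1)) / deriv (fun t => Vfun t β₁) φ *
          (deriv (fun t => Ufun t β₁) φ / Ufun φ β₁ -
            deriv (fun t => Vfun t β₁) φ / Vfun φ β₁)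
        < (3 * φ - β₁) / (1 - β₁) * (Vfun φ β₁ - 1) + 1 / 2 := by
  obtain ⟨-, -, hβ₁, -, hβ₂, -, hβ₃, -⟩ := hD
  exact log_deriv_bound_fixed_beta_general (le_trans (by norm_num) hβ₁)
    (lt_of_lt_of_le (by norm_num) hβ₂) (lt_of_lt_of_le (by norm_num) hβ₃)
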